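/- Let N ≥ 2, s ∈ (0,1), and let Ω ⊂ ℝ^N be a bounded Lipschitz domain. For every n ≥ 1, μ_n^{(s)}(Ω) = inf over n-dimensional linear subspaces A of H^s(Ω) ∩ L²₀(Ω) of sup_{u ∈ A, u≠0} (c_{N,s}/2)[ũ]²_{H^s_{Ω,0}} / ‖u‖²_{L²(Ω)}, where ũ denotes the s-minimal extension of u. -/

import Mathlib

open MeasureTheory Filter Topology Bornology Set
open scoped ENNReal NNReal

noncomputable section

namespace FracNeumann

abbrev Euc (N : ℕ) : Type := EuclideanSpace ℝ (Fin N)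

/-- The kernel weight `|x - y| ^ (N + 2s)`. -/
def kern (N : ℕ) (s : ℝ) (x y : Euc N) : ℝ := ‖x - y‖ ^ ((N : ℝ) + 2 * s)

/-- The region `ℝ^{2N} \ (Ω^c × Ω^c)`, where `Ω^c := ℝ^N \ closure Ω`. -/
def reg (N : ℕ) (Ω : Set (Euc N)) : Set (Euc N × Euc N) :=
  {q | q.1 ∈ closure Ω ∨ q.2 ∈ closure Ω}

/-- The squared seminorm `[u]_{H^s_{Ω,0}}²`, as an extended real number. -/
def semiSq (N : ℕ) (s : ℝ) (Ω : Set (Euc N)) (u : Euc N → ℝ) : ℝ≥0∞ :=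
  ∫⁻ q in reg N Ω, ENNReal.ofReal ((u q.1 - u q.2) ^ 2 / kern N s q.1 q.2)

/-- `∫_Ω u²`, as an extended real number. -/
def l2sq (N : ℕ) (Ω : Set (Euc N)) (u : Euc N → ℝ) : ℝ≥0∞ :=
  ∫⁻ x in Ω, ENNReal.ofReal ((u x) ^ 2)

/-- Membership in `H^s_{Ω,0}`. -/
def memHs (N : ℕ) (s : ℝ) (Ω : Set (Euc N)) (u : Euc N → ℝ) : Prop :=
  Measurable u ∧ l2sq N Ω u < ⊤ ∧ semiSq N s Ω u < ⊤

/-- The squared Gagliardo seminorm `[u]_{H^s(Ω)}²`. -/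
def semiSqOn (N : ℕ) (s : ℝ) (Ω : Set (Euc N)) (u : Euc N → ℝ) : ℝ≥0∞ :=
  ∫⁻ q in Ω ×ˢ Ω, ENNReal.ofReal ((u q.1 - u q.2) ^ 2 / kern N s q.1 q.2)

/-- Membership in `H^s(Ω)` (for functions defined on all of `ℝ^N`). -/
def memHsOn (N : ℕ) (s : ℝ) (Ω : Set (Euc N)) (u : Euc N → ℝ) : Prop :=
  Measurable u ∧ l2sq N Ω u < ⊤ ∧ semiSqOn N s Ω u < ⊤

/-- The normalizing constant `c_{N,s}` of the fractional Laplacian. -/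
def cNs (N : ℕ) (s : ℝ) : ℝ :=
  (4 : ℝ) ^ s * s * Real.Gamma ((N : ℝ) / 2 + s) /
    (Real.pi ^ ((N : ℝ) / 2) * Real.Gamma (1 - s))

/-- The nonlocal Neumann derivative `𝒩_s u`. -/
def Nneu (N : ℕ) (s : ℝ) (Ω : Set (Euc N)) (u : Euc N → ℝ) (x : Euc N) : ℝ :=
  cNs N s * ∫ y in Ω, (u x - u y) / kern N s x y

/-- Membership in `H̃^s_{Ω,0}`: members of `H^s_{Ω,0}` with `𝒩_s u = 0` a.e. in `Ω^c`. -/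
def memHsTilde (N : ℕ) (s : ℝ) (Ω : Set (Euc N)) (u : Euc N → ℝ) : Prop :=
  memHs N s Ω u ∧ ∀ᵐ x ∂(volume.restrict (closure Ω)ᶜ), Nneu N s Ω u x = 0

/-- The first nontrivial Neumann eigenvalue `μ₁^{(s)}(Ω)`. -/
def mu1 (N : ℕ) (s : ℝ) (Ω : Set (Euc N)) : ℝ :=
  sInf {t : ℝ | ∃ u : Euc N → ℝ, memHs N s Ω u ∧ (∫ x in Ω, (u x) ^ 2) = 1 ∧
    (∫ x in Ω, u x) = 0 ∧ t = cNs N s / 2 * (semiSq N s Ω u).toReal}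

/-- The bilinear form (without the constant). -/
def bform (N : ℕ) (s : ℝ) (Ω : Set (Euc N)) (u v : Euc N → ℝ) : ℝ :=
  ∫ q in reg N Ω, (u q.1 - u q.2) * (v q.1 - v q.2) / kern N s q.1 q.2

/-- First nontrivial eigenfunction: weak solution associated to `μ₁^{(s)}(Ω)`. -/
def IsFirstEigen (N : ℕ) (s : ℝ) (Ω : Set (Euc N)) (u : Euc N → ℝ) : Prop :=
  memHs N s Ω u ∧ ¬ (u =ᵐ[volume.restrict Ω] 0) ∧ (∫ x in Ω, u x) = 0 ∧
    ∀ v : Euc N → ℝ, memHs N s Ω v →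
      cNs N s / 2 * bform N s Ω u v = mu1 N s Ω * ∫ x in Ω, u x * v x

/-- Reflection `σ_e(x) = x - 2(x·e)e` across the hyperplane `{x·e = 0}`. -/
def reflect (N : ℕ) (e x : Euc N) : Euc N := x - (2 * (inner ℝ x e : ℝ)) • e

/-- The polarization `P_e u` with respect to the hyperplane `{x·e = 0}`. -/
def polarize (N : ℕ) (e : Euc N) (u : Euc N → ℝ) (x : Euc N) : ℝ :=
  if 0 ≤ (inner ℝ x e : ℝ) then min (u x) (u (reflect N e x))
  else max (u x) (u (reflect N e x))

/-- Foliated Schwarz symmetry with respect to `p`. -/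
def FoliatedSchwarz (N : ℕ) (p : Euc N) (u : Euc N → ℝ) : Prop :=
  ∃ uh : ℝ → ℝ → ℝ, (∀ r : ℝ, AntitoneOn (uh r) (Icc 0 Real.pi)) ∧
    ∀ x : Euc N, x ≠ 0 → u x = uh ‖x‖ (Real.arccos ((inner ℝ x p : ℝ) / ‖x‖))

/-- Radial symmetry (pointwise). -/
def Radial (N : ℕ) (u : Euc N → ℝ) : Prop := ∃ f : ℝ → ℝ, ∀ x, u x = f ‖x‖

/-- Radial symmetry (a.e.). -/
def RadialAE (N : ℕ) (u : Euc N → ℝ) : Prop :=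
  ∃ f : ℝ → ℝ, ∀ᵐ x : Euc N ∂volume, u x = f ‖x‖

/-- The set `{x ∈ Ω : u x ≠ 0}` has exactly two connected components. -/
def TwoNodal (N : ℕ) (Ω : Set (Euc N)) (u : Euc N → ℝ) : Prop :=
  Nat.card (ConnectedComponents {x : Euc N // x ∈ Ω ∧ u x ≠ 0}) = 2

/-- Bounded Lipschitz domain: open, bounded, connected, and near every boundary point the set
is the region above the graph of a Lipschitz function in some direction `e`. -/
def IsLipschitzDomain (N : ℕ) (Ω : Set (Euc N)) : Prop :=
  IsOpen Ω ∧ IsBounded Ω ∧ IsConnected Ω ∧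
    ∀ x ∈ frontier Ω, ∃ e : Euc N, ‖e‖ = 1 ∧ ∃ r : ℝ, 0 < r ∧
      ∃ (L : NNReal) (f : Euc N → ℝ), LipschitzWith L f ∧
        ∀ y ∈ Metric.ball x r,
          (y ∈ Ω ↔ f (y - ((inner ℝ y e : ℝ)) • e) < (inner ℝ y e : ℝ))

/-- `g` is a weak gradient of `u` in `Ω`, square-integrable on `Ω`. -/
def IsWeakGradient (N : ℕ) (Ω : Set (Euc N)) (u : Euc N → ℝ) (g : Euc N → Euc N) : Prop :=
  Measurable g ∧ (∫⁻ x in Ω, ENNReal.ofReal (‖g x‖ ^ 2)) < ⊤ ∧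
    ∀ φ : Euc N → ℝ, ContDiff ℝ (⊤ : ℕ∞) φ → HasCompactSupport φ → tsupport φ ⊆ Ω →
      ∀ i : Fin N, (∫ x in Ω, u x * fderiv ℝ φ x (EuclideanSpace.single i 1)) =
        - ∫ x in Ω, g x i * φ x

/-- Membership in `H¹(Ω)`. -/
def memH1 (N : ℕ) (Ω : Set (Euc N)) (u : Euc N → ℝ) : Prop :=
  Measurable u ∧ l2sq N Ω u < ⊤ ∧ ∃ g, IsWeakGradient N Ω u g

/-- `∫_Ω |∇u|²`, as an extended real number. -/
def gradSq (N : ℕ) (Ω : Set (Euc N)) (u : Euc N → ℝ) : ℝ≥0∞ :=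
  ⨅ (g : Euc N → Euc N) (_ : IsWeakGradient N Ω u g), ∫⁻ x in Ω, ENNReal.ofReal (‖g x‖ ^ 2)

/-- Rayleigh quotient for the fractional Neumann problem. -/
def rayleighS (N : ℕ) (s : ℝ) (Ω : Set (Euc N)) (u : Euc N → ℝ) : ℝ≥0∞ :=
  ENNReal.ofReal (cNs N s / 2) * semiSq N s Ω u / l2sq N Ω u

/-- Rayleigh quotient for the local Neumann problem. -/
def rayleigh1 (N : ℕ) (Ω : Set (Euc N)) (u : Euc N → ℝ) : ℝ≥0∞ :=
  gradSq N Ω u / l2sq N Ω u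

/-- The min-max value `μ_n^{(s)}(Ω)` over `n`-dimensional subspaces of `H^s_{Ω,0} ∩ L²₀(Ω)`. -/
def muNs (N : ℕ) (s : ℝ) (Ω : Set (Euc N)) (n : ℕ) : ℝ≥0∞ :=
  ⨅ (A : Submodule ℝ (Euc N → ℝ)) (_ : Module.finrank ℝ A = n ∧
      (∀ u ∈ A, memHs N s Ω u ∧ (∫ x in Ω, u x) = 0) ∧
      (∀ u ∈ A, u =ᵐ[(volume : Measure (Euc N))] 0 → u = 0)),
    ⨆ (u : Euc N → ℝ) (_ : u ∈ A ∧ u ≠ 0), rayleighS N s Ω u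

/-- The min-max value over `n`-dimensional subspaces of `H̃^s_{Ω,0} ∩ L²₀(Ω)`. -/
def muNsTilde (N : ℕ) (s : ℝ) (Ω : Set (Euc N)) (n : ℕ) : ℝ≥0∞ :=
  ⨅ (A : Submodule ℝ (Euc N → ℝ)) (_ : Module.finrank ℝ A = n ∧
      (∀ u ∈ A, memHsTilde N s Ω u ∧ (∫ x in Ω, u x) = 0) ∧
      (∀ u ∈ A, u =ᵐ[(volume : Measure (Euc N))] 0 → u = 0)),
    ⨆ (u : Euc N → ℝ) (_ : u ∈ A ∧ u ≠ 0), rayleighS N s Ω u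

/-- The min-max value `μ_n^{(1)}(Ω)` over `n`-dimensional subspaces of `H¹(Ω) ∩ L²₀(Ω)`. -/
def muN1 (N : ℕ) (Ω : Set (Euc N)) (n : ℕ) : ℝ≥0∞ :=
  ⨅ (A : Submodule ℝ (Euc N → ℝ)) (_ : Module.finrank ℝ A = n ∧
      (∀ u ∈ A, memH1 N Ω u ∧ (∫ x in Ω, u x) = 0) ∧
      (∀ u ∈ A, u =ᵐ[volume.restrict Ω] 0 → u = 0)),
    ⨆ (u : Euc N → ℝ) (_ : u ∈ A ∧ u ≠ 0), rayleigh1 N Ω u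

/-- `μ_n^{(s)}(Ω)` including `μ₀^{(s)}(Ω) := 0`. -/
def muNsFull (N : ℕ) (s : ℝ) (Ω : Set (Euc N)) (n : ℕ) : ℝ≥0∞ :=
  if n = 0 then 0 else muNs N s Ω n

/-- `μ_n^{(1)}(Ω)` including `μ₀^{(1)}(Ω) := 0`. -/
def muN1Full (N : ℕ) (Ω : Set (Euc N)) (n : ℕ) : ℝ≥0∞ :=
  if n = 0 then 0 else muN1 N Ω n

/-- The squared `H^s_{Ω,0}`-seminorm of the `s`-minimal extension of `u`:
the minimal value of `[v]²` over `v ∈ H^s_{Ω,0}` with `v = u` a.e. in `Ω`. -/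
def minExtSemiSq (N : ℕ) (s : ℝ) (Ω : Set (Euc N)) (u : Euc N → ℝ) : ℝ≥0∞ :=
  ⨅ (v : Euc N → ℝ) (_ : memHs N s Ω v ∧ v =ᵐ[volume.restrict Ω] u), semiSq N s Ω v

/-- `ω_{N-1}`: volume of the unit ball of `ℝ^{N-1}`. -/
def omegaPrev (N : ℕ) : ℝ := (volume (Metric.ball (0 : Euc (N - 1)) 1)).toReal

/-- Membership in `L²₀(Ω)`. -/
def memL20 (N : ℕ) (Ω : Set (Euc N)) (u : Euc N → ℝ) : Prop :=
  Measurable u ∧ l2sq N Ω u < ⊤ ∧ (∫ x in Ω, u x) = 0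

/-- The functional `F_s` (value `+∞` outside `H^s(Ω)`). -/
def Fs (N : ℕ) (s : ℝ) (Ω : Set (Euc N)) (u : Euc N → ℝ) : ℝ≥0∞ :=
  ENNReal.ofReal (1 - s) * minExtSemiSq N s Ω u

/-- The functional `F₁` (value `+∞` outside `H¹(Ω)`). -/
def F1 (N : ℕ) (Ω : Set (Euc N)) (u : Euc N → ℝ) : ℝ≥0∞ :=
  ENNReal.ofReal (omegaPrev N / (2 * N)) * gradSq N Ω u

end FracNeumann
namespace FracNeumann

/-! Only the values of `v` on `Ω` are prescribed, so minimizing `[v]²_{H^s_{Ω,0}}` decouples into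
one problem for each `x` outside `closure Ω`: choose the number `v x` so as to minimize
`∫_Ω (v x - u y)² / |x - y|^{N+2s} dy`. The minimizer is the mean of `u` with respect to the finite
measure `|x - y|^{-N-2s} dy` on `Ω`, which is linear in `u`. Hence `u ↦ ũ` carries admissible
subspaces of `H^s(Ω)` to admissible subspaces of `H^s_{Ω,0}` of the same dimension without changing
the Rayleigh quotients, while conversely replacing `u ∈ H^s_{Ω,0}` by the minimal extension of
`u|_Ω` can only lower its quotient. Subspaces on which this exchange breaks down contain a function
whose quotient is infinite, and so do not affect the infimum. -/

section NullBoundary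

variable {E : Type*} [NormedAddCommGroup E] [NormedSpace ℝ E] [MeasurableSpace E] [BorelSpace E]
  [FiniteDimensional ℝ E] (μ : Measure E) [μ.IsAddHaarMeasure]

open scoped Pointwise in
/-- Translating the graph by `c • e` shifts its height by `c`, so distinct translates of it along
`e` are disjoint. -/
lemma addHaar_graph_eq_zero {φ : E →L[ℝ] ℝ} {e : E} (he : φ e = 1) {f : E → ℝ}
    (hf : Measurable f) : μ {y | f (y - φ y • e) = φ y} = 0 := by
  have height_of_mem_translate {c : ℝ} {z : E}
      (hz : z ∈ ({c • e} : Set E) + {y | f (y - φ y • e) = φ y}) : c = φ z - f (z - φ z • e) := by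
    obtain ⟨_, rfl, a, ha, rfl⟩ := hz
    have hproj : c • e + a - φ (c • e + a) • e = a - φ a • e := by
      simp only [map_add, map_smul, he, smul_eq_mul, mul_one, add_smul]
      abel
    rw [hproj, show f (a - φ a • e) = φ a from ha]
    simp [he]
  refine Measure.addHaar_eq_zero_of_disjoint_translates μ
    (fun n : ℕ ↦ (1 / ((n : ℝ) + 1)) • e) ?_ (fun m n hmn ↦ ?_)
    (measurableSet_eq_fun (by fun_prop) (by fun_prop))
  · exact Metric.isBounded_range_of_tendsto _
      (tendsto_one_div_add_atTop_nhds_zero_nat.smul_const e)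
  · refine disjoint_left.2 fun z hm hn ↦ hmn ?_
    have := (height_of_mem_translate hm).trans (height_of_mem_translate hn).symm
    simpa using this

lemma addHaar_frontier_eq_zero_of_locally_epigraph {Ω : Set E}
    (hΩ : ∀ x ∈ frontier Ω, ∃ U ∈ 𝓝 x, IsOpen U ∧ ∃ (φ : E →L[ℝ] ℝ) (e : E) (f : E → ℝ),
      φ e = 1 ∧ Continuous f ∧ ∀ y ∈ U, (y ∈ Ω ↔ f (y - φ y • e) < φ y)) :
    μ (frontier Ω) = 0 := by
  refine measure_null_of_locally_null _ fun x hx ↦ ?_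
  obtain ⟨U, hxU, hU, φ, e, f, he, hf, hmem⟩ := hΩ x hx
  refine ⟨frontier Ω ∩ U, inter_mem_nhdsWithin _ hxU,
    measure_mono_null ?_ (addHaar_graph_eq_zero μ he hf.measurable)⟩
  have hinter : Ω ∩ U = {y | f (y - φ y • e) < φ y} ∩ U := by
    ext y
    exact and_congr_left (hmem y)
  calc frontier Ω ∩ U = frontier {y | f (y - φ y • e) < φ y} ∩ U := by
        rw [← frontier_inter_open_inter hU, hinter, frontier_inter_open_inter hU]
    _ ⊆ frontier {y | f (y - φ y • e) < φ y} := inter_subset_left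
    _ ⊆ {y | f (y - φ y • e) = φ y} := frontier_lt_subset_eq (by fun_prop) φ.continuous

end NullBoundary

lemma IsLipschitzDomain.volume_frontier {N : ℕ} {Ω : Set (Euc N)} (hΩ : IsLipschitzDomain N Ω) :
    volume (frontier Ω) = 0 := by
  refine addHaar_frontier_eq_zero_of_locally_epigraph volume fun x hx ↦ ?_
  obtain ⟨e, he, r, hr, L, f, hf, hmem⟩ := hΩ.2.2.2 x hx
  refine ⟨Metric.ball x r, Metric.ball_mem_nhds x hr, Metric.isOpen_ball, innerSL ℝ e, e, f, ?_,
    hf.continuous, ?_⟩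
  · simp [he]
  · simpa only [innerSL_apply_apply, real_inner_comm] using hmem

section AverageAndSymmetry

variable {α : Type*} [MeasurableSpace α] {μ : Measure α}

lemma memLp_two_of_lintegral_sq_lt_top {u : α → ℝ} (hu : AEStronglyMeasurable u μ)
    (hfin : ∫⁻ y, ENNReal.ofReal (u y ^ 2) ∂μ < ⊤) : MemLp u 2 μ := by
  rw [memLp_two_iff_integrable_sq hu]
  exact ⟨hu.pow 2, (hasFiniteIntegral_iff_ofReal (ae_of_all _ fun _ ↦ sq_nonneg _)).2 hfin⟩

lemma lintegral_sq_average_sub_le [IsFiniteMeasure μ] {u : α → ℝ} (hu : MemLp u 2 μ) (t : ℝ) :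
    ∫⁻ y, ENNReal.ofReal (((⨍ z, u z ∂μ) - u y) ^ 2) ∂μ ≤
      ∫⁻ y, ENNReal.ofReal ((t - u y) ^ 2) ∂μ := by
  set m := ⨍ z, u z ∂μ
  have hsq (c : ℝ) : Integrable (fun y ↦ (c - u y) ^ 2) μ :=
    ((memLp_const c).sub hu).integrable_sq
  have hlin : Integrable (fun y ↦ m - u y) μ :=
    (integrable_const m).sub (hu.integrable one_le_two)
  rw [← ofReal_integral_eq_lintegral_ofReal (hsq _) (ae_of_all _ fun _ ↦ sq_nonneg _),
    ← ofReal_integral_eq_lintegral_ofReal (hsq _) (ae_of_all _ fun _ ↦ sq_nonneg _)]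
  refine ENNReal.ofReal_le_ofReal ?_
  calc ∫ y, (m - u y) ^ 2 ∂μ
      = ∫ y, (m - u y) ^ 2 + 2 * (t - m) * (m - u y) ∂μ := by
        rw [integral_add (hsq m) (hlin.const_mul _), integral_const_mul,
          integral_average_sub (hu.integrable one_le_two), mul_zero, add_zero]
    _ ≤ ∫ y, (t - u y) ^ 2 ∂μ := by
        refine integral_mono ((hsq m).add (hlin.const_mul _)) (hsq t) fun y ↦ ?_
        change (m - u y) ^ 2 + 2 * (t - m) * (m - u y) ≤ (t - u y) ^ 2
        linarith [sq_nonneg (t - m)]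

lemma setLIntegral_fst_or_snd_mem_of_symm [SFinite μ] {C : Set α} (hC : MeasurableSet C)
    {f : α → α → ℝ≥0∞} (hf : Measurable (Function.uncurry f)) (hsymm : ∀ x y, f x y = f y x) :
    ∫⁻ q in {q : α × α | q.1 ∈ C ∨ q.2 ∈ C}, f q.1 q.2 ∂μ.prod μ =
      ∫⁻ x in C, ∫⁻ y in C, f x y ∂μ ∂μ + 2 * ∫⁻ x in Cᶜ, ∫⁻ y in C, f x y ∂μ ∂μ := by
  have hunion : {q : α × α | q.1 ∈ C ∨ q.2 ∈ C} = C ×ˢ C ∪ (Cᶜ ×ˢ C ∪ C ×ˢ Cᶜ) := by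
    ext q
    simp only [mem_ofPred_eq, mem_union, mem_prod, mem_compl_iff]
    tauto
  have hmixed : Disjoint (Cᶜ ×ˢ C) (C ×ˢ Cᶜ) := disjoint_prod.2 (.inl disjoint_compl_left)
  have hdiag : Disjoint (C ×ˢ C) (Cᶜ ×ˢ C ∪ C ×ˢ Cᶜ) :=
    disjoint_union_right.2 ⟨disjoint_prod.2 (.inl disjoint_compl_right),
      disjoint_prod.2 (.inr disjoint_compl_right)⟩
  have hf' : Measurable fun q : α × α ↦ f q.1 q.2 := hf
  rw [hunion, lintegral_union ((hC.compl.prod hC).union (hC.prod hC.compl)) hdiag,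
    lintegral_union (hC.prod hC.compl) hmixed, setLIntegral_prod _ hf'.aemeasurable,
    setLIntegral_prod _ hf'.aemeasurable, setLIntegral_prod_symm _ hf'.aemeasurable, two_mul]
  congr 3 with x
  exact lintegral_congr fun y ↦ hsymm y x

end AverageAndSymmetry

section JumpKernel

open ProbabilityTheory

variable {N : ℕ} {s : ℝ} {Ω : Set (Euc N)} {u : Euc N → ℝ} {x : Euc N}

lemma kern_nonneg (x y : Euc N) : 0 ≤ kern N s x y :=
  Real.rpow_nonneg (norm_nonneg _) _

lemma kern_comm (x y : Euc N) : kern N s x y = kern N s y x := by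
  simp only [kern, norm_sub_rev]

lemma measurable_kern : Measurable fun q : Euc N × Euc N ↦ kern N s q.1 q.2 := by
  unfold kern
  fun_prop

variable (s Ω) in
/-- The measure `|x - y|^{-N-2s} dy` on `Ω`, as a transition kernel in `x`. -/
def jumpKernel : Kernel (Euc N) (Euc N) :=
  Kernel.withDensity (Kernel.const _ (volume.restrict Ω))
    fun x y ↦ ((kern N s x y)⁻¹.toNNReal : ℝ≥0∞)

instance : IsSFiniteKernel (jumpKernel s Ω) := by
  unfold jumpKernel
  infer_instance

lemma measurable_jumpDensity :
    Measurable (Function.uncurry fun x y : Euc N ↦ ((kern N s x y)⁻¹.toNNReal : ℝ≥0∞)) :=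
  measurable_kern.inv.real_toNNReal.coe_nnreal_ennreal

lemma jumpKernel_apply (x : Euc N) :
    jumpKernel s Ω x =
      (volume.restrict Ω).withDensity fun y ↦ ((kern N s x y)⁻¹.toNNReal : ℝ≥0∞) := by
  rw [jumpKernel, Kernel.withDensity_apply _ measurable_jumpDensity, Kernel.const_apply]

lemma jumpKernel_absolutelyContinuous (x : Euc N) : jumpKernel s Ω x ≪ volume.restrict Ω := by
  rw [jumpKernel_apply]
  exact withDensity_absolutelyContinuous _ _

lemma lintegral_jumpKernel_sq_sub (hu : Measurable u) (x : Euc N) (t : ℝ) :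
    ∫⁻ y, ENNReal.ofReal ((t - u y) ^ 2) ∂jumpKernel s Ω x =
      ∫⁻ y in Ω, ENNReal.ofReal ((t - u y) ^ 2 / kern N s x y) := by
  rw [jumpKernel, Kernel.lintegral_withDensity _ measurable_jumpDensity _ (by fun_prop),
    Kernel.const_apply]
  refine lintegral_congr fun y ↦ ?_
  rw [div_eq_mul_inv, mul_comm (_ ^ 2), ENNReal.ofReal_mul (inv_nonneg.2 (kern_nonneg x y))]
  rfl

lemma ae_restrict_mem_closure : ∀ᵐ y ∂volume.restrict Ω, y ∈ closure Ω :=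
  ae_restrict_of_ae_restrict_of_subset subset_closure
    (ae_restrict_mem isClosed_closure.measurableSet)

lemma exists_jumpKernel_le_smul (hs : 0 ≤ s) (hx : x ∉ closure Ω) :
    ∃ M : ℝ≥0, jumpKernel s Ω x ≤ (M : ℝ≥0∞) • volume.restrict Ω := by
  obtain ⟨ε, hε, hdist⟩ : ∃ ε > 0, ∀ y ∈ closure Ω, ε ≤ dist x y := by
    rw [← closure_closure] at hx
    simpa only [Metric.mem_closure_iff (s := closure Ω), not_forall, not_exists, not_and, not_lt,
      exists_prop] using hx
  refine ⟨(ε ^ ((N : ℝ) + 2 * s))⁻¹.toNNReal, ?_⟩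
  rw [jumpKernel_apply, ← withDensity_const]
  refine withDensity_mono ?_
  filter_upwards [ae_restrict_mem_closure] with y hy
  have hdist_y : ε ≤ ‖x - y‖ := dist_eq_norm x y ▸ hdist y hy
  unfold kern
  gcongr

lemma isFiniteMeasure_jumpKernel (hs : 0 ≤ s) (hΩ : volume Ω ≠ ⊤) (hx : x ∉ closure Ω) :
    IsFiniteMeasure (jumpKernel s Ω x) := by
  obtain ⟨M, hM⟩ := exists_jumpKernel_le_smul hs hx
  have : IsFiniteMeasure (volume.restrict Ω) := isFiniteMeasure_restrict.2 hΩ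
  have : IsFiniteMeasure ((M : ℝ≥0∞) • volume.restrict Ω) :=
    inferInstanceAs (IsFiniteMeasure (M • volume.restrict Ω))
  exact isFiniteMeasure_of_le _ hM

lemma memLp_two_jumpKernel (hs : 0 ≤ s) (hx : x ∉ closure Ω) (hu : Measurable u)
    (hu2 : l2sq N Ω u < ⊤) : MemLp u 2 (jumpKernel s Ω x) := by
  obtain ⟨M, hM⟩ := exists_jumpKernel_le_smul hs hx
  exact (memLp_two_of_lintegral_sq_lt_top hu.aestronglyMeasurable hu2).of_measure_le_smul
    ENNReal.coe_ne_top hM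

lemma integrable_jumpKernel (hs : 0 ≤ s) (hΩ : volume Ω ≠ ⊤) (hx : x ∉ closure Ω)
    (hu : Measurable u) (hu2 : l2sq N Ω u < ⊤) : Integrable u (jumpKernel s Ω x) := by
  have := isFiniteMeasure_jumpKernel hs hΩ hx
  exact (memLp_two_jumpKernel hs hx hu hu2).integrable one_le_two

end JumpKernel

section MinimalExtension

variable {N : ℕ} {s : ℝ} {Ω : Set (Euc N)} {u v : Euc N → ℝ} {x : Euc N}

open Classical in
variable (s Ω) in
/-- The `s`-minimal extension of `u|_Ω`, in closed form: at `x ∉ closure Ω` its value is the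
`|x - y|^{-N-2s} dy`-mean of `u` over `Ω`, which is the solution of `𝒩_s v x = 0`. -/
def minExt (u : Euc N → ℝ) : Euc N → ℝ :=
  (closure Ω).piecewise u fun x ↦ ⨍ y, u y ∂jumpKernel s Ω x

lemma minExt_of_mem (hx : x ∈ closure Ω) : minExt s Ω u x = u x :=
  if_pos hx

lemma minExt_of_notMem (hx : x ∉ closure Ω) : minExt s Ω u x = ⨍ y, u y ∂jumpKernel s Ω x :=
  if_neg hx

lemma minExt_ae_eq : minExt s Ω u =ᵐ[volume.restrict Ω] u :=
  ae_restrict_mem_closure.mono fun _ ↦ minExt_of_mem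

lemma measurable_minExt (hu : Measurable u) : Measurable (minExt s Ω u) := by
  refine hu.piecewise isClosed_closure.measurableSet ?_
  simp only [average_eq]
  exact ((jumpKernel s Ω).measurable_coe .univ).ennreal_toReal.inv.smul
    hu.stronglyMeasurable.integral_kernel.measurable

lemma minExt_add (hs : 0 ≤ s) (hΩ : volume Ω ≠ ⊤) (hu : Measurable u) (hu2 : l2sq N Ω u < ⊤)
    (hv : Measurable v) (hv2 : l2sq N Ω v < ⊤) :
    minExt s Ω (u + v) = minExt s Ω u + minExt s Ω v := by
  funext x
  by_cases hx : x ∈ closure Ω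
  · simp only [Pi.add_apply, minExt_of_mem hx]
  · simp only [Pi.add_apply, minExt_of_notMem hx, average_eq, ← smul_add,
      integral_add (integrable_jumpKernel hs hΩ hx hu hu2) (integrable_jumpKernel hs hΩ hx hv hv2)]

lemma minExt_smul (c : ℝ) : minExt s Ω (c • u) = c • minExt s Ω u := by
  funext x
  by_cases hx : x ∈ closure Ω
  · simp only [Pi.smul_apply, minExt_of_mem hx]
  · simp only [Pi.smul_apply, minExt_of_notMem hx, average_eq, integral_smul]
    rw [smul_comm]

/-- The minimal extension as a linear map, on any space of measurable functions that are
square-integrable over `Ω`. -/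
def minExtLinearMap (hs : 0 ≤ s) (hΩ : volume Ω ≠ ⊤) (A : Submodule ℝ (Euc N → ℝ))
    (hA : ∀ u ∈ A, Measurable u ∧ l2sq N Ω u < ⊤) : A →ₗ[ℝ] (Euc N → ℝ) where
  toFun u := minExt s Ω u
  map_add' u v :=
    minExt_add hs hΩ (hA u u.2).1 (hA u u.2).2 (hA v v.2).1 (hA v v.2).2
  map_smul' c _ := minExt_smul c

lemma semiSq_eq_lintegral_jumpKernel (hcl : closure Ω =ᵐ[volume] Ω) (hu : Measurable u) :
    semiSq N s Ω u =
      (∫⁻ x in Ω, ∫⁻ y, ENNReal.ofReal ((u x - u y) ^ 2) ∂jumpKernel s Ω x) +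
        2 * ∫⁻ x in (closure Ω)ᶜ, ∫⁻ y, ENNReal.ofReal ((u x - u y) ^ 2) ∂jumpKernel s Ω x := by
  have hmeas : Measurable (Function.uncurry fun x y ↦
      ENNReal.ofReal ((u x - u y) ^ 2 / kern N s x y)) :=
    ((((hu.comp measurable_fst).sub (hu.comp measurable_snd)).pow_const 2).div
      measurable_kern).ennreal_ofReal
  have hsymm (x y : Euc N) : ENNReal.ofReal ((u x - u y) ^ 2 / kern N s x y) =
      ENNReal.ofReal ((u y - u x) ^ 2 / kern N s y x) := by
    rw [kern_comm, sub_sq_comm]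
  simp only [lintegral_jumpKernel_sq_sub hu, ← Measure.restrict_congr_set hcl]
  exact setLIntegral_fst_or_snd_mem_of_symm isClosed_closure.measurableSet hmeas hsymm

lemma semiSq_minExt_le (hs : 0 ≤ s) (hcl : closure Ω =ᵐ[volume] Ω) (hΩ : volume Ω ≠ ⊤)
    (hu : Measurable u) (hu2 : l2sq N Ω u < ⊤) (hv : Measurable v)
    (hvu : v =ᵐ[volume.restrict Ω] u) : semiSq N s Ω (minExt s Ω u) ≤ semiSq N s Ω v := by
  have hcongr {w : Euc N → ℝ} (hw : w =ᵐ[volume.restrict Ω] u) (x : Euc N) (t : ℝ) :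
      ∫⁻ y, ENNReal.ofReal ((t - w y) ^ 2) ∂jumpKernel s Ω x =
        ∫⁻ y, ENNReal.ofReal ((t - u y) ^ 2) ∂jumpKernel s Ω x := by
    refine lintegral_congr_ae ?_
    filter_upwards [(jumpKernel_absolutelyContinuous x).ae_le hw] with y hy
    rw [hy]
  rw [semiSq_eq_lintegral_jumpKernel hcl (measurable_minExt hu),
    semiSq_eq_lintegral_jumpKernel hcl hv]
  simp only [hcongr minExt_ae_eq, hcongr hvu]
  gcongr ?_ + 2 * ?_
  · refine (lintegral_congr_ae ?_).le
    filter_upwards [minExt_ae_eq, hvu] with x hx hx'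
    rw [hx, hx']
  · refine setLIntegral_mono' isClosed_closure.measurableSet.compl fun x hx ↦ ?_
    have := isFiniteMeasure_jumpKernel hs hΩ hx
    rw [minExt_of_notMem hx]
    exact lintegral_sq_average_sub_le (memLp_two_jumpKernel hs hx hu hu2) (v x)

lemma l2sq_congr (h : u =ᵐ[volume.restrict Ω] v) : l2sq N Ω u = l2sq N Ω v := by
  refine lintegral_congr_ae ?_
  filter_upwards [h] with x hx
  rw [hx]

lemma minExtSemiSq_le_semiSq (hu : memHs N s Ω u) : minExtSemiSq N s Ω u ≤ semiSq N s Ω u :=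
  iInf₂_le u ⟨hu, .rfl⟩

lemma minExtSemiSq_zero : minExtSemiSq N s Ω 0 = 0 := by
  have hsemi : semiSq N s Ω 0 = 0 := by simp [semiSq]
  have hmem : memHs N s Ω 0 := ⟨measurable_const, by simp [l2sq], by simp [hsemi]⟩
  exact le_antisymm ((minExtSemiSq_le_semiSq hmem).trans_eq hsemi) zero_le

theorem minExtSemiSq_eq_semiSq_minExt (hs : 0 ≤ s) (hcl : closure Ω =ᵐ[volume] Ω)
    (hΩ : volume Ω ≠ ⊤) (hu : Measurable u) (hu2 : l2sq N Ω u < ⊤) :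
    minExtSemiSq N s Ω u = semiSq N s Ω (minExt s Ω u) := by
  refine le_antisymm ?_ (le_iInf₂ fun v hv ↦ semiSq_minExt_le hs hcl hΩ hu hu2 hv.1.1 hv.2)
  rcases eq_top_or_lt_top (semiSq N s Ω (minExt s Ω u)) with htop | hfin
  · exact htop ▸ le_top
  · exact iInf₂_le _
      ⟨⟨measurable_minExt hu, (l2sq_congr minExt_ae_eq).trans_lt hu2, hfin⟩, minExt_ae_eq⟩

end MinimalExtension

section MinMax

variable {N : ℕ} {s : ℝ} {Ω : Set (Euc N)} {u : Euc N → ℝ}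

lemma cNs_pos (hs : s ∈ Ioo (0 : ℝ) 1) : 0 < cNs N s := by
  have := hs.1
  have : 0 < Real.Gamma ((N : ℝ) / 2 + s) := Real.Gamma_pos_of_pos (by positivity)
  have : 0 < Real.Gamma (1 - s) := Real.Gamma_pos_of_pos (sub_pos.2 hs.2)
  unfold cNs
  positivity

lemma ofReal_cNs_div_two_ne_zero (hs : s ∈ Ioo (0 : ℝ) 1) : ENNReal.ofReal (cNs N s / 2) ≠ 0 :=
  (ENNReal.ofReal_pos.2 (half_pos (cNs_pos hs))).ne'

lemma memHs.memHsOn (hu : memHs N s Ω u) : memHsOn N s Ω u :=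
  ⟨hu.1, hu.2.1, (lintegral_mono_set fun _ hq ↦ Or.inl (subset_closure hq.1)).trans_lt hu.2.2⟩

lemma exists_ae_eq_const_of_semiSq_eq_zero (hΩ : volume Ω ≠ 0) (hu : Measurable u)
    (h : semiSq N s Ω u = 0) : ∃ c, u =ᵐ[volume] fun _ ↦ c := by
  have hmeas : Measurable fun q : Euc N × Euc N ↦
      ENNReal.ofReal ((u q.1 - u q.2) ^ 2 / kern N s q.1 q.2) :=
    ((((hu.comp measurable_fst).sub (hu.comp measurable_snd)).pow_const 2).div
      measurable_kern).ennreal_ofReal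
  have hstrip : ∫⁻ q in Ω ×ˢ (univ : Set (Euc N)),
      ENNReal.ofReal ((u q.1 - u q.2) ^ 2 / kern N s q.1 q.2) = 0 :=
    nonpos_iff_eq_zero.1 <|
      (lintegral_mono_set fun _ hq ↦ Or.inl (subset_closure hq.1)).trans_eq h
  rw [lintegral_eq_zero_iff hmeas, Measure.volume_eq_prod, ← Measure.prod_restrict,
    Measure.restrict_univ] at hstrip
  have : (ae ((volume : Measure (Euc N)).restrict Ω)).NeBot :=
    ae_restrict_neBot.2 hΩ
  obtain ⟨x, hx⟩ := (Measure.ae_ae_of_ae_prod hstrip).exists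
  refine ⟨u x, hx.mono fun y hy ↦ ?_⟩
  rcases eq_or_ne x y with rfl | hxy
  · rfl
  · have hkern : 0 < kern N s x y := Real.rpow_pos_of_pos (norm_sub_pos_iff.2 hxy) _
    have hsq : (u x - u y) ^ 2 ≤ 0 := by
      simpa [div_le_iff₀ hkern] using hy
    exact (sub_eq_zero.1 (pow_eq_zero_iff two_ne_zero |>.1 (hsq.antisymm (sq_nonneg _)))).symm

lemma ae_eq_zero_of_rayleighS_ne_top (hs : s ∈ Ioo (0 : ℝ) 1) (hΩ : volume Ω ≠ 0)
    (hu : Measurable u) (hu0 : u =ᵐ[volume.restrict Ω] 0) (hray : rayleighS N s Ω u ≠ ⊤) :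
    u =ᵐ[volume] 0 := by
  have hl2 : l2sq N Ω u = 0 := (l2sq_congr hu0).trans (by simp [l2sq])
  have hsemi : semiSq N s Ω u = 0 := by
    contrapose! hray
    rw [rayleighS, hl2, ENNReal.div_zero (mul_ne_zero (ofReal_cNs_div_two_ne_zero hs) hray)]
  obtain ⟨c, hc⟩ := exists_ae_eq_const_of_semiSq_eq_zero hΩ hu hsemi
  have : (ae ((volume : Measure (Euc N)).restrict Ω)).NeBot :=
    ae_restrict_neBot.2 hΩ
  obtain ⟨x, hx0, hxc⟩ := (hu0.and (ae_restrict_of_ae hc)).exists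
  obtain rfl : c = 0 := hxc.symm.trans hx0
  exact hc

lemma minExtSemiSq_ne_top_of_quotient_ne_top (hs : s ∈ Ioo (0 : ℝ) 1) (hu2 : l2sq N Ω u < ⊤)
    (hquot : ENNReal.ofReal (cNs N s / 2) * minExtSemiSq N s Ω u / l2sq N Ω u ≠ ⊤) :
    minExtSemiSq N s Ω u ≠ ⊤ := by
  contrapose! hquot
  rw [hquot, ENNReal.mul_top (ofReal_cNs_div_two_ne_zero hs),
    ENNReal.top_div_of_ne_top hu2.ne]

theorem muNs_le_iSup_minExtSemiSq (hs : s ∈ Ioo (0 : ℝ) 1) (hcl : closure Ω =ᵐ[volume] Ω)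
    (hΩ : volume Ω ≠ ⊤) {A : Submodule ℝ (Euc N → ℝ)}
    (hmem : ∀ u ∈ A, memHsOn N s Ω u ∧ ∫ x in Ω, u x = 0)
    (hinj : ∀ u ∈ A, u =ᵐ[volume.restrict Ω] 0 → u = 0) :
    muNs N s Ω (Module.finrank ℝ A) ≤
      ⨆ (u : Euc N → ℝ) (_ : u ∈ A ∧ u ≠ 0),
        ENNReal.ofReal (cNs N s / 2) * minExtSemiSq N s Ω u / l2sq N Ω u := by
  rcases eq_or_ne (⨆ (u : Euc N → ℝ) (_ : u ∈ A ∧ u ≠ 0),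
    ENNReal.ofReal (cNs N s / 2) * minExtSemiSq N s Ω u / l2sq N Ω u) ⊤ with htop | hfin
  · exact htop ▸ le_top
  have hL2 (u) (hu : u ∈ A) : Measurable u ∧ l2sq N Ω u < ⊤ :=
    ⟨(hmem u hu).1.1, (hmem u hu).1.2.1⟩
  have hmin (u) (hu : u ∈ A) : minExtSemiSq N s Ω u = semiSq N s Ω (minExt s Ω u) :=
    minExtSemiSq_eq_semiSq_minExt hs.1.le hcl hΩ (hL2 u hu).1 (hL2 u hu).2
  have hsemi (u) (hu : u ∈ A) : semiSq N s Ω (minExt s Ω u) < ⊤ := by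
    rw [← hmin u hu, lt_top_iff_ne_top]
    rcases eq_or_ne u 0 with rfl | hu0
    · simp [minExtSemiSq_zero]
    · exact minExtSemiSq_ne_top_of_quotient_ne_top hs (hL2 u hu).2
        (ne_top_of_le_ne_top hfin (le_iSup₂_of_le u ⟨hu, hu0⟩ le_rfl))
  let T := minExtLinearMap hs.1.le hΩ A hL2
  have eq_zero_of_T_ae_eq_zero (u : A) (hu : T u =ᵐ[volume.restrict Ω] 0) : u = 0 :=
    Subtype.ext (hinj u u.2 (minExt_ae_eq.symm.trans hu))
  have hT : Function.Injective T := (injective_iff_map_eq_zero T).2 fun u hu ↦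
    eq_zero_of_T_ae_eq_zero u (.of_eq hu)
  refine le_trans (iInf₂_le (LinearMap.range T)
    (And.intro (LinearMap.finrank_range_of_inj hT) (And.intro ?_ ?_))) (iSup₂_le ?_)
  · rintro _ ⟨u, rfl⟩
    exact ⟨⟨measurable_minExt (hL2 u u.2).1, (l2sq_congr minExt_ae_eq).trans_lt (hL2 u u.2).2,
      hsemi u u.2⟩, (integral_congr_ae minExt_ae_eq).trans (hmem u u.2).2⟩
  · rintro _ ⟨u, rfl⟩ hu
    rw [eq_zero_of_T_ae_eq_zero u (ae_restrict_of_ae hu), map_zero]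
  · rintro _ ⟨⟨u, rfl⟩, hTu⟩
    have hu : (u : Euc N → ℝ) ≠ 0 := by
      contrapose! hTu
      rw [show u = 0 from Subtype.ext hTu, map_zero]
    refine le_iSup₂_of_le (u : Euc N → ℝ) ⟨u.2, hu⟩ (le_of_eq ?_)
    rw [hmin u u.2, ← l2sq_congr minExt_ae_eq]
    rfl

theorem iInf_iSup_minExtSemiSq_le_iSup_rayleighS (hs : s ∈ Ioo (0 : ℝ) 1) (hΩ : volume Ω ≠ 0)
    {A : Submodule ℝ (Euc N → ℝ)} (hmem : ∀ u ∈ A, memHs N s Ω u ∧ ∫ x in Ω, u x = 0)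
    (hinj : ∀ u ∈ A, u =ᵐ[volume] 0 → u = 0) :
    ⨅ (B : Submodule ℝ (Euc N → ℝ)) (_ : Module.finrank ℝ B = Module.finrank ℝ A ∧
        (∀ u ∈ B, memHsOn N s Ω u ∧ ∫ x in Ω, u x = 0) ∧
        (∀ u ∈ B, u =ᵐ[volume.restrict Ω] 0 → u = 0)),
      ⨆ (u : Euc N → ℝ) (_ : u ∈ B ∧ u ≠ 0),
        ENNReal.ofReal (cNs N s / 2) * minExtSemiSq N s Ω u / l2sq N Ω u ≤
      ⨆ (u : Euc N → ℝ) (_ : u ∈ A ∧ u ≠ 0), rayleighS N s Ω u := by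
  rcases eq_or_ne (⨆ (u : Euc N → ℝ) (_ : u ∈ A ∧ u ≠ 0), rayleighS N s Ω u) ⊤ with htop | hfin
  · exact htop ▸ le_top
  refine le_trans (iInf₂_le A (And.intro rfl
    (And.intro (fun u hu ↦ ⟨(hmem u hu).1.memHsOn, (hmem u hu).2⟩) ?_)))
    (iSup₂_mono fun u hu ↦ ?_)
  · intro u hu hu0
    by_contra hne
    exact hne <| hinj u hu <| ae_eq_zero_of_rayleighS_ne_top hs hΩ (hmem u hu).1.1 hu0 <|
      ne_top_of_le_ne_top hfin (le_iSup₂_of_le u ⟨hu, hne⟩ le_rfl)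
  · unfold rayleighS
    gcongr
    exact minExtSemiSq_le_semiSq (hmem u hu.1).1

end MinMax

theorem statement5_general (N : ℕ) (s : ℝ) (hs : s ∈ Set.Ioo (0 : ℝ) 1) (Ω : Set (Euc N))
    (hcl : closure Ω =ᵐ[volume] Ω) (hpos : volume Ω ≠ 0) (hfin : volume Ω ≠ ⊤) (n : ℕ) :
    muNs N s Ω n =
      ⨅ (A : Submodule ℝ (Euc N → ℝ)) (_ : Module.finrank ℝ A = n ∧
          (∀ u ∈ A, memHsOn N s Ω u ∧ (∫ x in Ω, u x) = 0) ∧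
          (∀ u ∈ A, u =ᵐ[volume.restrict Ω] 0 → u = 0)),
        ⨆ (u : Euc N → ℝ) (_ : u ∈ A ∧ u ≠ 0),
          ENNReal.ofReal (cNs N s / 2) * minExtSemiSq N s Ω u / l2sq N Ω u := by
  refine le_antisymm (le_iInf₂ ?_) (le_iInf₂ ?_)
  · rintro A ⟨rfl, hmem, hinj⟩
    exact muNs_le_iSup_minExtSemiSq hs hcl hfin hmem hinj
  · rintro A ⟨rfl, hmem, hinj⟩
    exact iInf_iSup_minExtSemiSq_le_iSup_rayleighS hs hpos hmem hinj

/-- Corollary 2.8: characterization of `μ_n^{(s)}(Ω)` via `n`-dimensional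
subspaces of `H^s(Ω) ∩ L²₀(Ω)` and `s`-minimal extensions. -/
theorem statement5 (N : ℕ) (hN : 2 ≤ N) (s : ℝ) (hs : s ∈ Set.Ioo (0 : ℝ) 1)
    (Ω : Set (Euc N)) (hΩ : IsLipschitzDomain N Ω) (n : ℕ) (hn : 1 ≤ n) :
    muNs N s Ω n =
      ⨅ (A : Submodule ℝ (Euc N → ℝ)) (_ : Module.finrank ℝ A = n ∧
          (∀ u ∈ A, memHsOn N s Ω u ∧ (∫ x in Ω, u x) = 0) ∧
          (∀ u ∈ A, u =ᵐ[volume.restrict Ω] 0 → u = 0)),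
        ⨆ (u : Euc N → ℝ) (_ : u ∈ A ∧ u ≠ 0),
          ENNReal.ofReal (cNs N s / 2) * minExtSemiSq N s Ω u / l2sq N Ω u :=
  statement5_general N s hs Ω (closure_ae_eq_of_null_frontier hΩ.volume_frontier)
    (hΩ.1.measure_pos volume hΩ.2.2.1.nonempty).ne' hΩ.2.1.measure_lt_top.ne n

end FracNeumann
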